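/- Unsafety of label reuse with reordering: for the linear context Δ = p : ⊕q:m(ℕ).S, q : &{p:m(String).S′, ⏱.S″} and any unrestricted context Γ and affine buffer context Θ′ = Θ·(p→q, m(String)), NO safety property φ_∅ (for the empty reliability relation) holds of Γ;Δ;Θ′. In particular, the output transition labelled pq!m yields contexts Γ; p:S, q:&{p:m(String).S′, ⏱.S″}; Θ·(p→q,m(String))·(p→q,m(ℕ)) in which the buffer contains a message type (p→q, m(ℕ)) matching the branch at q expecting payload type String, violating condition φ-c; hence by condition φ-→ the original contexts cannot satisfy any safety property. -/

import Mathlib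

/-!
# MAGπ!: syntax, semantics, types, typing, and safety

A deep embedding of the MAGπ! calculus (Le Brun & Dardha), with:
roles / labels / variables, linear and replicated processes, networks with
bag buffers, reduction up to structural congruence with failure rules,
session / replicated / message types, the three typing contexts
(unrestricted Γ, linear Δ, affine Θ), the context LTS, the typing
judgement, and the generalised notion of safety property φ_R.
-/

namespace MagPi

abbrev Role := String
abbrev Label := String
abbrev Var := String

/-- Basic types. -/
inductive BType where
  | nat | real | string
deriving DecidableEq

/-- Basic values. -/
inductive Val where
  | vnat (n : ℕ)
  | vreal (r : ℝ)
  | vstr (s : String)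

/-- Typing of basic values. -/
def Val.hasType : Val → BType → Prop
  | .vnat _, .nat => True
  | .vreal _, .real => True
  | .vstr _, .string => True
  | _, _ => False

/-- Payloads: variables or basic values. -/
inductive Payload where
  | var (x : Var)
  | val (v : Val)

/-- Linear processes `P ::= 0 | &_{i∈I} p_i:m_i(x̃_i).P_i [, ⏱.P′] | ⊕p:m⟨c̃⟩.P`. -/
inductive LProc where
  | nil : LProc
  | recv (bs : List (Role × Label × List Var × LProc)) (tmo : Option LProc) : LProc
  | send (q : Role) (m : Label) (cs : List Payload) (cont : LProc) : LProc

/-- Process instructions `𝒫 ::= !_{i∈I} p_i:m_i(x̃_i).P_i | 𝒫 | 𝒫 | P`. -/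
inductive Proc where
  | repl (bs : List (Role × Label × List Var × LProc)) : Proc
  | par (P1 P2 : Proc) : Proc
  | lin (Q : LProc) : Proc

/-- A message `⟨p→q, m⟨ṽ⟩⟩`: source, destination, label, payload values. -/
abbrev Msg := Role × Role × Label × List Val

/-- A buffer is a multiset (bag) of messages. -/
abbrev Buf := Multiset Msg

/-- Networks `𝒩 ::= p ◁ 𝒫 | 𝒩 ‖ 𝒩 | ℬ`. -/
inductive Network where
  | proc (p : Role) (P : Proc)
  | par (N1 N2 : Network)
  | buf (B : Buf)

/-! ## Substitution -/

abbrev Env := Var → Option Val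

def Env.remove (σ : Env) (xs : List Var) : Env := fun y => if y ∈ xs then none else σ y

def mkEnv (xs : List Var) (vs : List Val) : Env := fun y => (xs.zip vs).lookup y

def Payload.subst (σ : Env) : Payload → Payload
  | .var x =>
    match σ x with
    | some v => .val v
    | none => .var x
  | .val v => .val v

mutual
/-- Capture-avoiding substitution of values for variables in a linear process. -/
def LProc.subst (σ : Env) : LProc → LProc
  | .nil => .nil
  | .recv bs tmo => .recv (substBranches σ bs) (substOpt σ tmo)
  | .send q m cs cont => .send q m (cs.map (Payload.subst σ)) (LProc.subst σ cont)

def substBranches (σ : Env) :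
    List (Role × Label × List Var × LProc) → List (Role × Label × List Var × LProc)
  | [] => []
  | (q, m, xs, P) :: rest => (q, m, xs, LProc.subst (σ.remove xs) P) :: substBranches σ rest

def substOpt (σ : Env) : Option LProc → Option LProc
  | none => none
  | some P => some (LProc.subst σ P)
end

/-! ## Structural congruence -/

/-- Roles occurring as process owners in a network. -/
def Network.roles : Network → Set Role
  | .proc p _ => {p}
  | .par N1 N2 => N1.roles ∪ N2.roles
  | .buf _ => ∅

/-- Structural congruence on process instructions. -/
inductive PCong : Proc → Proc → Prop
  | refl (P) : PCong P P
  | symm : PCong P Q → PCong Q P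
  | trans : PCong P Q → PCong Q R → PCong P R
  | parComm (P Q) : PCong (.par P Q) (.par Q P)
  | parAssoc (P Q R) : PCong (.par (.par P Q) R) (.par P (.par Q R))
  | parNil (P) : PCong (.par P (.lin .nil)) P
  | parCong : PCong P P' → PCong Q Q' → PCong (.par P Q) (.par P' Q')

/-- Structural congruence on networks. -/
inductive NCong : Network → Network → Prop
  | refl (N) : NCong N N
  | symm : NCong N N' → NCong N' N
  | trans : NCong N1 N2 → NCong N2 N3 → NCong N1 N3
  | parComm (N1 N2) : NCong (.par N1 N2) (.par N2 N1)
  | parAssoc (N1 N2 N3) : NCong (.par (.par N1 N2) N3) (.par N1 (.par N2 N3))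
  | parNil : p ∉ N.roles → NCong (.par N (.proc p (.lin .nil))) N
  | parCong : NCong N1 N1' → NCong N2 N2' → NCong (.par N1 N2) (.par N1' N2')
  | procCong : PCong P P' → NCong (.proc p P) (.proc p P')

/-! ## Reliability and network reduction -/

/-- A reliability relation is a set of unordered pairs `{p,q}` of distinct roles. -/
def IsReliability (R : Set (Set Role)) : Prop :=
  ∀ s ∈ R, ∃ p q : Role, p ≠ q ∧ s = {p, q}

/-- `{p,q} ∈ R`: communication between `p` and `q` is reliable. -/
def Reliab (R : Set (Set Role)) (p q : Role) : Prop := ({p, q} : Set Role) ∈ R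

/-- Network reduction `→_R`, defined up to structural congruence. -/
inductive NetRed (R : Set (Set Role)) : Network → Network → Prop
  /-- [P-Send] -/
  | send {p q m vs P B} :
      NetRed R (.par (.proc p (.lin (.send q m (vs.map Payload.val) P))) (.buf B))
               (.par (.proc p (.lin P)) (.buf (B + {(p, q, m, vs)})))
  /-- [P-Recv] -/
  | recv {p q l ys vs Pk bs tmo B} :
      (q, l, ys, Pk) ∈ bs → ys.length = vs.length →
      NetRed R (.par (.proc p (.lin (.recv bs tmo))) (.buf (B + {(q, p, l, vs)})))
               (.par (.proc p (.lin (Pk.subst (mkEnv ys vs)))) (.buf B))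
  /-- [P-!Recv] -/
  | replRecv {p q l ys vs Pk bs B} :
      (q, l, ys, Pk) ∈ bs → ys.length = vs.length →
      NetRed R (.par (.proc p (.repl bs)) (.buf (B + {(q, p, l, vs)})))
               (.par (.proc p (.par (.repl bs) (.lin (Pk.subst (mkEnv ys vs))))) (.buf B))
  /-- [F-Drop] -/
  | drop {p q m vs B} :
      ¬ Reliab R p q →
      NetRed R (.buf (B + {(p, q, m, vs)})) (.buf B)
  /-- [F-Timeout] -/
  | timeout {p bs Q} :
      NetRed R (.proc p (.lin (.recv bs (some Q)))) (.proc p (.lin Q))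
  /-- [N-‖] -/
  | parN {N N' N''} : NetRed R N N' → NetRed R (.par N N'') (.par N' N'')
  /-- [P-|] -/
  | parP {N N' p P P' P''} :
      NetRed R (.par N (.proc p P)) (.par N' (.proc p P')) →
      NetRed R (.par N (.proc p (.par P P''))) (.par N' (.proc p (.par P' P'')))
  /-- closure under structural congruence -/
  | cong {N1 N1' N2 N2'} :
      NCong N1 N1' → NetRed R N1' N2' → NCong N2' N2 → NetRed R N1 N2

/-- Multi-step network reduction `→_R*`. -/
abbrev NetRedStar (R : Set (Set Role)) : Network → Network → Prop :=
  Relation.ReflTransGen (NetRed R)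

/-! ## Types -/

/-- Session types `S ::= ⊕_{i∈I} p_i:m_i(B̃_i).S_i | &_{i∈I} p_i:m_i(B̃_i).S_i [, ⏱.S′] | S|S | end`. -/
inductive SType where
  | endT : SType
  | sel (bs : List (Role × Label × List BType × SType)) : SType
  | branch (bs : List (Role × Label × List BType × SType)) (tmo : Option SType) : SType
  | par (S1 S2 : SType) : SType

/-- Replicated types `R ::= !_{i∈I} p_i:m_i(B̃_i).S_i`. -/
abbrev RType := List (Role × Label × List BType × SType)

/-- Message types `(p→q, m(B̃))`. -/
abbrev MType := Role × Role × Label × List BType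

/-- Unrestricted context Γ: variables to basic types, roles to replicated types. -/
structure GCtx where
  vars : Var → Option BType
  roles : Role → Option RType

/-- Linear context Δ: roles to session types. -/
abbrev DCtx := Role → Option SType

/-- Affine context Θ: a multiset of message types. -/
abbrev TCtx := Multiset MType

def DCtx.empty : DCtx := fun _ => none

def DCtx.single (p : Role) (S : SType) : DCtx := fun q => if q = p then some S else none

/-- Context update `Δ₁ + Δ₂` (clashing entries are composed in parallel). -/
def DCtx.add (Δ1 Δ2 : DCtx) : DCtx := fun p =>
  match Δ1 p, Δ2 p with
  | none, o => o
  | some S, none => some S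
  | some S1, some S2 => some (.par S1 S2)

/-- Pointwise context splitting of a single entry. -/
inductive OSplit : Option SType → Option SType → Option SType → Prop
  | none : OSplit none none none
  | left (S) : OSplit (some S) (some S) none
  | right (S) : OSplit (some S) none (some S)
  | par (S1 S2) : OSplit (some (.par S1 S2)) (some S1) (some S2)

/-- Context splitting `Δ = Δ₁ · Δ₂`. -/
def DSplit (Δ Δ1 Δ2 : DCtx) : Prop := ∀ p, OSplit (Δ p) (Δ1 p) (Δ2 p)

/-- Disjoint-domain context composition requirement. -/
def DDisj (Δ1 Δ2 : DCtx) : Prop := ∀ p, Δ1 p = none ∨ Δ2 p = none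

/-- `end(Δ)`: every session type in Δ is `end`. -/
def EndCtx (Δ : DCtx) : Prop := ∀ p S, Δ p = some S → S = SType.endT

/-! ## Context LTS and context reduction -/

/-- Actions: output `pq!m`, communication `pq:m`, timeout `p⏱`. -/
inductive Action where
  | out (p q : Role) (m : Label)
  | com (p q : Role) (m : Label)
  | time (p : Role)

/-- The type-level LTS on contexts. -/
inductive CtxStep (Γ : GCtx) : DCtx → TCtx → Action → DCtx → TCtx → Prop
  /-- [Δ-⏱] -/
  | timeout {Δ0 Δ Θ p bs S'} :
      DSplit Δ0 Δ (DCtx.single p (.branch bs (some S'))) →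
      CtxStep Γ Δ0 Θ (.time p) (Δ.add (DCtx.single p S')) Θ
  /-- [Δ-⊕] -/
  | send {Δ0 Δ Θ p bs q m Bs Sk} :
      DSplit Δ0 Δ (DCtx.single p (.sel bs)) → (q, m, Bs, Sk) ∈ bs →
      CtxStep Γ Δ0 Θ (.out p q m) (Δ.add (DCtx.single p Sk)) (Θ + {(p, q, m, Bs)})
  /-- [Δ-C] -/
  | com {Δ0 Δ Θ p bs tmo q m Bs Sk} :
      DSplit Δ0 Δ (DCtx.single p (.branch bs tmo)) → (q, m, Bs, Sk) ∈ bs →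
      CtxStep Γ Δ0 (Θ + {(q, p, m, Bs)}) (.com q p m) (Δ.add (DCtx.single p Sk)) Θ
  /-- [Γ-!C] -/
  | bang {Δ Θ p tbs q m Bs Sk} :
      Γ.roles p = some tbs → (q, m, Bs, Sk) ∈ tbs →
      CtxStep Γ Δ (Θ + {(q, p, m, Bs)}) (.com q p m) (Δ.add (DCtx.single p Sk)) Θ

/-- Context reduction `Γ;Δ;Θ → Γ;Δ′;Θ′`. -/
def CtxRed (Γ : GCtx) (c c' : DCtx × TCtx) : Prop :=
  ∃ α, CtxStep Γ c.1 c.2 α c'.1 c'.2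

/-- Multi-step context reduction `→*`. -/
abbrev CtxRedStar (Γ : GCtx) : DCtx × TCtx → DCtx × TCtx → Prop :=
  Relation.ReflTransGen (CtxRed Γ)

/-! ## Typing -/

/-- Typing of payloads under Γ ([T-Var], [T-Val]). -/
def PayloadTyped (Γ : GCtx) : Payload → BType → Prop
  | .var x, B => Γ.vars x = some B
  | .val v, B => v.hasType B

/-- Extend the variable part of Γ with bindings `x̃ : B̃`. -/
def GCtx.addVars (Γ : GCtx) (xs : List Var) (Bs : List BType) : GCtx :=
  { Γ with
    vars := fun y =>
      match (xs.zip Bs).lookup y with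
      | some B => some B
      | none => Γ.vars y }

/-- Typing of linear processes located at a role ([T-0], [T-⊕], [T-&]). -/
inductive LTyped : GCtx → DCtx → Role → LProc → Prop
  | nil {Γ Δ p} : EndCtx Δ → LTyped Γ Δ p .nil
  | send {Γ p tbs q m Bs Sk cs cont} :
      (tbs.map fun b => (b.1, b.2.1)).Nodup →
      (q, m, Bs, Sk) ∈ tbs →
      List.Forall₂ (PayloadTyped Γ) cs Bs →
      LTyped Γ (DCtx.single p Sk) p cont →
      LTyped Γ (DCtx.single p (.sel tbs)) p (.send q m cs cont)
  | recv {Γ p pbs tbs ptmo ttmo} :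
      tbs ≠ [] →
      (tbs.map fun b => (b.1, b.2.1)).Nodup →
      pbs.length = tbs.length →
      (∀ i (h1 : i < pbs.length) (h2 : i < tbs.length),
          (pbs.get ⟨i, h1⟩).1 = (tbs.get ⟨i, h2⟩).1) →
      (∀ i (h1 : i < pbs.length) (h2 : i < tbs.length),
          (pbs.get ⟨i, h1⟩).2.1 = (tbs.get ⟨i, h2⟩).2.1) →
      (∀ i (h1 : i < pbs.length) (h2 : i < tbs.length),
          (pbs.get ⟨i, h1⟩).2.2.1.length = (tbs.get ⟨i, h2⟩).2.2.1.length) →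
      (∀ i (h1 : i < pbs.length) (h2 : i < tbs.length),
          LTyped (GCtx.addVars Γ (pbs.get ⟨i, h1⟩).2.2.1 (tbs.get ⟨i, h2⟩).2.2.1)
            (DCtx.single p (tbs.get ⟨i, h2⟩).2.2.2) p (pbs.get ⟨i, h1⟩).2.2.2) →
      ptmo.isSome = ttmo.isSome →
      (∀ P' S', ptmo = some P' → ttmo = some S' → LTyped Γ (DCtx.single p S') p P') →
      LTyped Γ (DCtx.single p (.branch tbs ttmo)) p (.recv pbs ptmo)

/-- Matching of process branches against type branches (same sources and
labels, payload arities match, and each continuation is well typed). -/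
def BranchesTyped (Γ : GCtx) (p : Role) (pbs : List (Role × Label × List Var × LProc))
    (tbs : RType) : Prop :=
  List.Forall₂
    (fun (pb : Role × Label × List Var × LProc) (tb : Role × Label × List BType × SType) =>
      pb.1 = tb.1 ∧ pb.2.1 = tb.2.1 ∧ pb.2.2.1.length = tb.2.2.1.length ∧
        LTyped (Γ.addVars pb.2.2.1 tb.2.2.1) (DCtx.single p tb.2.2.2) p pb.2.2.2)
    pbs tbs

/-- Typing of process instructions ([T-!], [T-|]). -/
inductive PTyped (Γ : GCtx) : DCtx → Role → Proc → Prop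
  | lin {Δ p Q} : LTyped Γ Δ p Q → PTyped Γ Δ p (.lin Q)
  | repl {p pbs tbs} :
      Γ.roles p = some tbs →
      tbs ≠ [] →
      (tbs.map fun b => (b.1, b.2.1)).Nodup →
      BranchesTyped Γ p pbs tbs →
      PTyped Γ DCtx.empty p (.repl pbs)
  | par {Δ Δ1 Δ2 p P1 P2} :
      DSplit Δ Δ1 Δ2 → PTyped Γ Δ1 p P1 → PTyped Γ Δ2 p P2 → PTyped Γ Δ p (.par P1 P2)

/-- Typing of buffers ([T-Empty], [T-Buf]); Θ is affine so unused message
types may be left over. -/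
inductive BTyped (Γ : GCtx) : TCtx → Buf → Prop
  | empty {Θ} : BTyped Γ Θ 0
  | cons {Θ B p q m vs Bs} :
      List.Forall₂ Val.hasType vs Bs →
      BTyped Γ Θ B →
      BTyped Γ (Θ + {(p, q, m, Bs)}) (B + {(p, q, m, vs)})

/-- The typing judgement `Γ;Δ;Θ ⊢ 𝒩` ([T-‖₁], [T-‖₂] and the process rules). -/
inductive NTyped (Γ : GCtx) : DCtx → TCtx → Network → Prop
  | proc {Δ p P} : PTyped Γ Δ p P → NTyped Γ Δ 0 (.proc p P)
  | buf {Θ B} : BTyped Γ Θ B → NTyped Γ DCtx.empty Θ (.buf B)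
  | parNet {Δ1 Δ2 N1 N2} :
      DDisj Δ1 Δ2 → NTyped Γ Δ1 0 N1 → NTyped Γ Δ2 0 N2 →
      NTyped Γ (Δ1.add Δ2) 0 (.par N1 N2)
  | parBuf {Δ Θ N B} :
      NTyped Γ Δ 0 N → BTyped Γ Θ B → NTyped Γ Δ Θ (.par N (.buf B))

/-! ## Safety properties -/

/-- `φ_R` is a safety property: conditions [φ-r₁], [φ-r₂], [φ-c], [φ-!c], [φ-→]. -/
def IsSafetyProp (R : Set (Set Role)) (φ : GCtx → DCtx → TCtx → Prop) : Prop :=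
  -- [φ-r₁]: branches without timeout receive only from reliable peers
  (∀ Γ Δ0 Δ Θ p (bs : List (Role × Label × List BType × SType)),
      φ Γ Δ0 Θ → DSplit Δ0 Δ (DCtx.single p (.branch bs none)) →
      ∀ b ∈ bs, ({b.1, p} : Set Role) ∈ R) ∧
  -- [φ-r₂]: branches with timeout have some unreliable source
  (∀ Γ Δ0 Δ Θ p (bs : List (Role × Label × List BType × SType)) S',
      φ Γ Δ0 Θ → DSplit Δ0 Δ (DCtx.single p (.branch bs (some S'))) →
      ∃ b ∈ bs, ({b.1, p} : Set Role) ∉ R) ∧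
  -- [φ-c]: a message type matching a linear branch has the expected payload types
  (∀ Γ Δ0 Δ Θ p (bs : List (Role × Label × List BType × SType)) tmo q m Bs Sk Bs',
      φ Γ Δ0 (Θ + {(q, p, m, Bs')}) →
      DSplit Δ0 Δ (DCtx.single p (.branch bs tmo)) →
      (q, m, Bs, Sk) ∈ bs →
      Bs' = Bs) ∧
  -- [φ-!c]: a message type matching a replicated receive has the expected payload types
  (∀ Γ Δ Θ p (tbs : RType) q m Bs Sk Bs',
      φ Γ Δ (Θ + {(q, p, m, Bs')}) →
      Γ.roles p = some tbs →
      (q, m, Bs, Sk) ∈ tbs →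
      Bs' = Bs) ∧
  -- [φ-→]: preservation under context reduction
  (∀ Γ Δ Θ Δ' Θ',
      φ Γ Δ Θ → CtxRed Γ (Δ, Θ) (Δ', Θ') → φ Γ Δ' Θ')

theorem DDisj.dsplit_add {Δ1 Δ2 : DCtx} (h : DDisj Δ1 Δ2) :
    DSplit (Δ1.add Δ2) Δ1 Δ2 := by
  intro r
  have hr := h r
  unfold DCtx.add
  cases h1 : Δ1 r <;> cases h2 : Δ2 r <;> simp_all <;> constructor

theorem DDisj.dsplit_add_swap {Δ1 Δ2 : DCtx} (h : DDisj Δ1 Δ2) :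
    DSplit (Δ1.add Δ2) Δ2 Δ1 := by
  intro r
  have hr := h r
  unfold DCtx.add
  cases h1 : Δ1 r <;> cases h2 : Δ2 r <;> simp_all <;> constructor

theorem DDisj.single {p q : Role} (hpq : p ≠ q) (S T : SType) :
    DDisj (DCtx.single p S) (DCtx.single q T) := by
  intro r
  by_cases hr : r = p
  · exact Or.inr (if_neg (hr ▸ hpq))
  · exact Or.inl (if_neg hr)

theorem DCtx.single_add_single {p q : Role} (hpq : p ≠ q) (S T : SType) :
    (DCtx.single q T).add (DCtx.single p S) =
      fun r => if r = p then some S else if r = q then some T else none := by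
  funext r
  unfold DCtx.add DCtx.single
  by_cases hp : r = p
  · simp [hp, hpq]
  · by_cases hq : r = q <;> simp [hp, hq, hpq.symm]

/-- **Unsafety of label reuse with reordering** (Example: Interactions with
Failure, Types/Safety): for the linear context
`Δ = p : ⊕q:m(ℕ).S, q : &{p:m(String).S′, ⏱.S″}` and any `Γ` and
`Θ′ = Θ·(p→q, m(String))`, no safety property for the empty reliability
relation holds of `Γ;Δ;Θ′`. -/
theorem label_reuse_unsafe
    (p q : Role) (hpq : p ≠ q) (m : Label)
    (S S' S'' : SType) (Γ : GCtx) (Θ : TCtx) (Δ : DCtx)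
    (hΔ : Δ = fun r =>
      if r = p then some (.sel [(q, m, [.nat], S)])
      else if r = q then some (.branch [(p, m, [.string], S')] (some S''))
      else none)
    (φ : GCtx → DCtx → TCtx → Prop) (hφ : IsSafetyProp (∅ : Set (Set Role)) φ) :
    ¬ φ Γ Δ (Θ + {(p, q, m, [BType.string])}) := by
  obtain ⟨-, -, h_payload, -, h_red⟩ := hφ
  intro h
  rw [hΔ, ← DCtx.single_add_single hpq] at h
  have h_sent := h_red _ _ _ _ _ h
    ⟨_, .send (DDisj.single hpq.symm _ _).dsplit_add (List.mem_singleton.mpr rfl)⟩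
  simpa using h_payload _ _ _ _ _ _ _ _ _ _ _ _ h_sent
    (DDisj.single hpq.symm _ _).dsplit_add_swap (List.mem_singleton.mpr rfl)

end MagPi
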